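/- Suppose a_k ≤ 0 for k = 2, …, s. Then for every u ∈ U, Q^a(u) ≥ A ‖Du‖²_{ℓ²_ε} − Σ_{k=2}^{s} ε² (k−1) a_k ‖D²u‖²_{ℓ²_ε}. -/

import Mathlib

/-!
Write `w = Du`. For `k` real numbers `x₀, …, x_{k-1}` the Lagrange identity
`(∑ xⱼ)² = k ∑ xⱼ² - ∑_{i<j} (xᵢ - xⱼ)²` gives, on keeping only the pairs of neighbours,
`(∑ xⱼ)² + ∑ (x_{j+1} - xⱼ)² ≤ k ∑ xⱼ²` (`sq_sum_add_neighbours_le`). Applied to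
`xⱼ = w_{ℓ+j}` and summed over a period, where shifts do not change sums of periodic sequences
(`sum_rng_shift`), this becomes
`∑_ℓ (∑_{j<k} w_{ℓ+j})² ≤ k² ∑ w² - (k - 1) ∑ (w_ℓ - w_{ℓ-1})²` (`sum_sq_window_le`).
Multiplying by `a_k ≤ 0` reverses the inequality for `k ≥ 2`; for `k = 1` it is an equality, so the
sign of `a₁` is irrelevant. The factor `ε²` cancels the one in `D²u = Dw`.
-/

open Finset Real

noncomputable section

/-- scaled lattice spacing ε = 1/N -/
def eps (N : ℕ) : ℝ := 1 / N

/-- the index range ℓ = -N+1, …, N -/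
def rng (N : ℕ) : Finset ℤ := Finset.Icc (-(N : ℤ) + 1) N

/-- 2N-periodicity of a sequence -/
def Periodic2N (N : ℕ) (u : ℤ → ℝ) : Prop := ∀ ℓ : ℤ, u (ℓ + 2 * (N : ℤ)) = u ℓ

/-- the space 𝒰 of 2N-periodic zero-mean displacements -/
def memU (N : ℕ) (u : ℤ → ℝ) : Prop :=
  Periodic2N N u ∧ ∑ ℓ ∈ rng N, u ℓ = 0

/-- discrete differentiation operator: (Dv)_ℓ = (v_ℓ - v_{ℓ-1})/ε -/
def Dv (N : ℕ) (v : ℤ → ℝ) : ℤ → ℝ := fun ℓ => (v ℓ - v (ℓ - 1)) / eps N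

/-- squared discrete ℓ²_ε norm -/
def nsq (N : ℕ) (v : ℤ → ℝ) : ℝ := eps N * ∑ ℓ ∈ rng N, v ℓ ^ 2

/-- discrete ℓ²_ε norm -/
def nrm (N : ℕ) (v : ℤ → ℝ) : ℝ := Real.sqrt (nsq N v)

/-- squared discrete ℓ²_ε seminorm over an index set S -/
def nsqS (N : ℕ) (S : Finset ℤ) (v : ℤ → ℝ) : ℝ := eps N * ∑ ℓ ∈ S, v ℓ ^ 2

/-- discrete ℓ²_ε seminorm over an index set S -/
def nrmS (N : ℕ) (S : Finset ℤ) (v : ℤ → ℝ) : ℝ := Real.sqrt (nsqS N S v)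

/-- discrete ℓ^∞ norm over an index set S -/
def linf (S : Finset ℤ) (v : ℤ → ℝ) : ℝ := sSup ((fun ℓ => |v ℓ|) '' (S : Set ℤ))

/-- the interfacial index set 𝒜_qnl(k) -/
def Aqnl (K : ℤ) (k : ℕ) : Finset ℤ := Finset.Icc (-K - (k : ℤ) + 1) (K + 1)

/-- the continuum index set 𝒞_qnl(k) -/
def Cqnl (N : ℕ) (K : ℤ) (k : ℕ) : Finset ℤ :=
  Finset.Icc (-(N : ℤ) + 1) (-K - (k : ℤ)) ∪ Finset.Icc (K + 2) (N : ℤ)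

/-- the interface ℐ_qnl(k) between continuum and atomistic regions -/
def Iqnl (K : ℤ) (k : ℕ) : Finset ℤ :=
  Finset.Icc (-K - (k : ℤ) + 1) (-K - 1) ∪ Finset.Icc (K + 2) (K + (k : ℤ))

/-- the extended continuum region 𝒞̃_qnl(k) = 𝒞_qnl(k) ∪ ℐ_qnl(k) -/
def Ctil (N : ℕ) (K : ℤ) (k : ℕ) : Finset ℤ := Cqnl N K k ∪ Iqnl K k

/-- the s-th nearest-neighbor atomistic Hessian quadratic form -/
def Qa (N s : ℕ) (a : ℕ → ℝ) (u : ℤ → ℝ) : ℝ :=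
  eps N * ∑ ℓ ∈ rng N, ∑ k ∈ Finset.Icc 1 s,
    a k * (∑ j ∈ Finset.range k, Dv N u (ℓ + (j : ℤ))) ^ 2

lemma sum_rng_shift_one {N : ℕ} {f : ℤ → ℝ} (hf : Periodic2N N f) :
    ∑ ℓ ∈ rng N, f (ℓ + 1) = ∑ ℓ ∈ rng N, f ℓ := by
  rcases Nat.eq_zero_or_pos N with rfl | hN
  · simp [rng]
  have h1 : rng N = insert (-(N : ℤ) + 1) (Finset.Icc (-(N : ℤ) + 2) N) := by
    ext x; simp only [rng, Finset.mem_insert, Finset.mem_Icc]; omega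
  have h2 : (rng N).map (addRightEmbedding 1)
      = insert ((N : ℤ) + 1) (Finset.Icc (-(N : ℤ) + 2) N) := by
    rw [rng, Finset.map_add_right_Icc]
    ext x; simp only [Finset.mem_insert, Finset.mem_Icc]; omega
  have h3 : ∑ ℓ ∈ rng N, f (ℓ + 1) = ∑ ℓ ∈ (rng N).map (addRightEmbedding 1), f ℓ := by
    simp
  rw [h3, h2, h1, Finset.sum_insert (by simp), Finset.sum_insert (by simp),
    ← hf (-(N : ℤ) + 1)]
  congr 2
  ring

lemma sum_rng_shift {N : ℕ} {f : ℤ → ℝ} (hf : Periodic2N N f) (j : ℕ) :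
    ∑ ℓ ∈ rng N, f (ℓ + j) = ∑ ℓ ∈ rng N, f ℓ := by
  induction j with
  | zero => simp
  | succ j ih =>
    have hg : Periodic2N N (fun ℓ => f (ℓ + j)) := fun ℓ => by
      simpa [add_right_comm] using hf (ℓ + j)
    rw [← ih, ← sum_rng_shift_one hg]
    refine Finset.sum_congr rfl fun ℓ _ => ?_
    congr 1
    push_cast
    ring

/-- The Lagrange identity with all pairs dropped except the neighbouring ones. The count is written
`n + 1` so that the `n` neighbouring pairs are indexed without subtraction. -/
lemma sq_sum_add_neighbours_le (x : ℕ → ℝ) (n : ℕ) :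
    (∑ j ∈ Finset.range (n + 1), x j) ^ 2 + ∑ j ∈ Finset.range n, (x (j + 1) - x j) ^ 2
      ≤ ((n : ℝ) + 1) * ∑ j ∈ Finset.range (n + 1), x j ^ 2 := by
  induction n with
  | zero => simp
  | succ n ih =>
    -- Among the new pairs `(j, n + 1)`, `j ≤ n`, only `j = n` is kept.
    have key : (x (n + 1) - x n) ^ 2 ≤ ∑ j ∈ Finset.range (n + 1), (x (n + 1) - x j) ^ 2 :=
      Finset.single_le_sum (f := fun j => (x (n + 1) - x j) ^ 2) (fun j _ => sq_nonneg _)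
        (Finset.mem_range.2 n.lt_succ_self)
    have expand : ∑ j ∈ Finset.range (n + 1), (x (n + 1) - x j) ^ 2
        = ((n : ℝ) + 1) * x (n + 1) ^ 2 - 2 * x (n + 1) * ∑ j ∈ Finset.range (n + 1), x j
          + ∑ j ∈ Finset.range (n + 1), x j ^ 2 := by
      simp only [sub_sq, Finset.sum_add_distrib, Finset.sum_sub_distrib, Finset.sum_const,
        Finset.card_range, nsmul_eq_mul, ← Finset.mul_sum]
      push_cast
      ring
    rw [Finset.sum_range_succ x (n + 1), Finset.sum_range_succ (fun j => (x (j + 1) - x j) ^ 2) n,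
      Finset.sum_range_succ (fun j => x j ^ 2) (n + 1)]
    push_cast
    rw [expand] at key
    linarith

/-- The bound for a single interaction range `k = n + 1`. -/
lemma sum_sq_window_le {N : ℕ} {w : ℤ → ℝ} (hw : Periodic2N N w) (n : ℕ) :
    ∑ ℓ ∈ rng N, (∑ j ∈ Finset.range (n + 1), w (ℓ + (j : ℤ))) ^ 2
      ≤ ((n : ℝ) + 1) ^ 2 * ∑ ℓ ∈ rng N, w ℓ ^ 2
        - (n : ℝ) * ∑ ℓ ∈ rng N, (w ℓ - w (ℓ - 1)) ^ 2 := by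
  have h := Finset.sum_le_sum fun ℓ (_ : ℓ ∈ rng N) =>
    sq_sum_add_neighbours_le (fun j => w (ℓ + (j : ℤ))) n
  have hsq : Periodic2N N (fun ℓ => w ℓ ^ 2) := fun ℓ => by simp only [hw ℓ]
  have hdiff : Periodic2N N (fun ℓ => (w ℓ - w (ℓ - 1)) ^ 2) := fun ℓ => by
    have := hw (ℓ - 1)
    rw [sub_add_eq_add_sub] at this
    simp only [hw ℓ, this]
  have e1 : ∑ ℓ ∈ rng N, ∑ j ∈ Finset.range (n + 1), w (ℓ + (j : ℤ)) ^ 2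
      = ((n : ℝ) + 1) * ∑ ℓ ∈ rng N, w ℓ ^ 2 := by
    rw [Finset.sum_comm, Finset.sum_congr rfl fun j _ => sum_rng_shift hsq j]
    simp
  have e2 : ∑ ℓ ∈ rng N, ∑ j ∈ Finset.range n, (w (ℓ + ((j + 1 : ℕ) : ℤ)) - w (ℓ + (j : ℤ))) ^ 2
      = (n : ℝ) * ∑ ℓ ∈ rng N, (w ℓ - w (ℓ - 1)) ^ 2 := by
    have hs : ∀ j ∈ Finset.range n,
        ∑ ℓ ∈ rng N, (w (ℓ + ((j + 1 : ℕ) : ℤ)) - w (ℓ + (j : ℤ))) ^ 2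
          = ∑ ℓ ∈ rng N, (w ℓ - w (ℓ - 1)) ^ 2 := fun j _ => by
      rw [← sum_rng_shift hdiff (j + 1)]
      refine Finset.sum_congr rfl fun ℓ _ => ?_
      rw [show ℓ + ((j + 1 : ℕ) : ℤ) - 1 = ℓ + (j : ℤ) by push_cast; ring]
    rw [Finset.sum_comm, Finset.sum_congr rfl hs]
    simp
  rw [Finset.sum_add_distrib, ← Finset.mul_sum, e1, e2] at h
  linarith

/-- lower bound for the s-th nearest-neighbor atomistic Hessian. -/
theorem atomistic_hessian_lower_bound (N : ℕ) (hN : 0 < N) (s : ℕ) (hs : 2 ≤ s)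
    (a : ℕ → ℝ) (ha : ∀ k ∈ Finset.Icc 2 s, a k ≤ 0)
    (u : ℤ → ℝ) (hu : memU N u) :
    Qa N s a u ≥
      (∑ k ∈ Finset.Icc 1 s, (k : ℝ) ^ 2 * a k) * nsq N (Dv N u)
        - ∑ k ∈ Finset.Icc 2 s, (eps N) ^ 2 * ((k : ℝ) - 1) * a k * nsq N (Dv N (Dv N u)) := by
  have hε : 0 < eps N := by unfold eps; positivity
  have hw : Periodic2N N (Dv N u) := fun ℓ => by
    have := hu.1 (ℓ - 1)
    rw [sub_add_eq_add_sub] at this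
    simp only [Dv, hu.1 ℓ, this]
  unfold Qa
  generalize Dv N u = w at hw
  have hD : (eps N) ^ 2 * nsq N (Dv N w) = eps N * ∑ ℓ ∈ rng N, (w ℓ - w (ℓ - 1)) ^ 2 := by
    simp only [nsq, Dv, div_pow, ← Finset.sum_div]
    field_simp
  -- The `k = 1` summand of the correction term vanishes, so it may be added.
  have hext : ∑ k ∈ Finset.Icc 2 s, (eps N) ^ 2 * ((k : ℝ) - 1) * a k * nsq N (Dv N w)
      = ∑ k ∈ Finset.Icc 1 s, (eps N) ^ 2 * ((k : ℝ) - 1) * a k * nsq N (Dv N w) := by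
    refine Finset.sum_subset (Finset.Icc_subset_Icc_left one_le_two) fun k hk hk' => ?_
    have : k = 1 := by
      simp only [Finset.mem_Icc] at hk hk'
      omega
    simp [this]
  rw [hext, Finset.sum_comm, Finset.mul_sum, Finset.sum_mul, ← Finset.sum_sub_distrib, ge_iff_le]
  refine Finset.sum_le_sum fun k hk => ?_
  rw [← Finset.mul_sum]
  obtain ⟨n, rfl⟩ : ∃ n, k = n + 1 := ⟨k - 1, by have := (Finset.mem_Icc.1 hk).1; omega⟩
  have hlhs : ((n + 1 : ℕ) : ℝ) ^ 2 * a (n + 1) * nsq N w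
        - (eps N) ^ 2 * (((n + 1 : ℕ) : ℝ) - 1) * a (n + 1) * nsq N (Dv N w)
      = eps N * (a (n + 1) * (((n : ℝ) + 1) ^ 2 * ∑ ℓ ∈ rng N, w ℓ ^ 2
        - (n : ℝ) * ∑ ℓ ∈ rng N, (w ℓ - w (ℓ - 1)) ^ 2)) := by
    push_cast
    rw [show nsq N w = eps N * ∑ ℓ ∈ rng N, w ℓ ^ 2 from rfl]
    linear_combination (-(n : ℝ) * a (n + 1)) * hD
  rw [hlhs]
  refine mul_le_mul_of_nonneg_left ?_ hε.le
  rcases Nat.eq_zero_or_pos n with rfl | hn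
  · simp
  · refine mul_le_mul_of_nonpos_left (sum_sq_window_le hw n) (ha _ ?_)
    rw [Finset.mem_Icc] at hk ⊢
    omega
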